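/- Fix d > 0 and let G_t be the two-dimensional heat kernel. Let Ω_O ⊆ ℝ² be a bounded open set with 0 ∈ Ω_O, let Γ := ∂Ω_O, let σ be the one-dimensional Hausdorff measure restricted to Γ, assumed finite, and let n : Γ → ℝ² be measurable with |n(x)| = 1 for all x ∈ Γ. Let φ̄ : [0,∞) → ℝ be measurable with ∫₀ᵗ |φ̄| < ∞ for all t, and define û(x,t) := ∫₀ᵗ G_{t−s}(x) φ̄(s) ds. Then the constant C_Γ := ∫_Γ (8e^{−2}/π)² |x|^{−6} dσ(x) is finite and positive, and for all t > 0 one has ∫₀ᵗ ∫_Γ |d ∇_x û(x,τ) · n(x)|² dσ(x) dτ ≤ d² C_Γ ∫₀ᵗ (∫₀^τ |φ̄(s)| ds)² dτ. -/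

import Mathlib

open MeasureTheory Real
open scoped RealInnerProductSpace

/-- The two-dimensional heat (Green's) kernel with diffusion coefficient `d`. -/
noncomputable def heatKernel (d t : ℝ) (x : EuclideanSpace ℝ (Fin 2)) : ℝ :=
  (4 * Real.pi * d * t)⁻¹ * Real.exp (-‖x‖ ^ 2 / (4 * d * t))

/-!
Write `z = |x|² / (4dt)`. The gradient of the heat kernel satisfies
`|∇G_t(x)| = (2/π) |x|⁻³ z² e^{-z}`, and `z² e^{-z} ≤ 4 e^{-2}`, so `|∇G_t(x)| ≤ (8e^{-2}/π) |x|⁻³`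
uniformly in time. Away from the source the solution can therefore be differentiated under the
integral sign, which gives `|∇û(x, τ)| ≤ (8e^{-2}/π) |x|⁻³ ∫₀^τ |φ|`. Here the variables separate,
and the bound follows by squaring and integrating.

The constant is finite because the boundary stays away from the origin. It is positive because every
line through a bounded neighbourhood of the origin meets the boundary, so that the boundary projects
onto a set of positive length and cannot be null.
-/

open Set Module Bornology

section Frontier

variable {E : Type*} [NormedAddCommGroup E]

lemma exists_pos_forall_le_norm_of_mem_frontier {Ω : Set E} (h0 : 0 ∈ interior Ω) :
    ∃ ε > 0, ∀ x ∈ frontier Ω, ε ≤ ‖x‖ := by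
  obtain ⟨ε, hε, hball⟩ := Metric.isOpen_iff.1 isOpen_interior 0 h0
  refine ⟨ε, hε, fun x hx => not_lt.1 fun hlt => ?_⟩
  exact disjoint_interior_frontier.notMem_of_mem_left (hball (by simpa using hlt)) hx

variable [NormedSpace ℝ E]

lemma image_subset_image_frontier {F : Type*} [AddCommGroup F] [Module ℝ F] {f : E →ₗ[ℝ] F}
    (hf : LinearMap.ker f ≠ ⊥) {Ω : Set E} (hΩ : IsBounded Ω) : f '' Ω ⊆ f '' frontier Ω := by
  rintro _ ⟨x, hx, rfl⟩
  obtain ⟨v, hv, hv0⟩ := Submodule.exists_mem_ne_zero_of_ne_bot hf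
  let line : ℝ → E := AffineMap.lineMap x (x + v)
  have hline : IsBounded (line ⁻¹' Ω) :=
    (antilipschitzWith_lineMap (𝕜 := ℝ) (by simpa using hv0)).isBounded_preimage hΩ
  obtain ⟨r, hr⟩ : (frontier (line ⁻¹' Ω)).Nonempty :=
    nonempty_frontier_iff.2 ⟨⟨0, by simpa [line] using hx⟩,
      fun h => NormedSpace.unbounded_univ ℝ ℝ (h ▸ hline)⟩
  refine ⟨line r, AffineMap.lineMap_continuous.frontier_preimage_subset Ω hr, ?_⟩
  simp [line, AffineMap.lineMap_apply, LinearMap.mem_ker.1 hv]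

/-- Projecting the boundary along a direction in `ker f` covers the projection of the interior,
and a Lipschitz map cannot turn a null set into an open one. -/
lemma hausdorffMeasure_frontier_pos {F : Type*} [NormedAddCommGroup F] [NormedSpace ℝ F]
    [FiniteDimensional ℝ F] [MeasurableSpace E] [BorelSpace E] {f : E →L[ℝ] F}
    (hsurj : Function.Surjective f) (hker : LinearMap.ker (f : E →ₗ[ℝ] F) ≠ ⊥) {Ω : Set E}
    (hΩ : IsBounded Ω) (hne : (interior Ω).Nonempty) :
    0 < Measure.hausdorffMeasure (finrank ℝ F) (frontier Ω) := by
  borelize F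
  have hopen : IsOpen (f '' interior Ω) :=
    (f : E →ₗ[ℝ] F).isOpenMap_of_finiteDimensional hsurj _ isOpen_interior
  have hpos : 0 < Measure.hausdorffMeasure (finrank ℝ F) (f '' frontier Ω) :=
    (hopen.measure_pos _ (hne.image f)).trans_le <| measure_mono <|
      (image_mono interior_subset).trans (image_subset_image_frontier hker hΩ)
  refine pos_of_ne_zero fun hzero => hpos.not_ge ?_
  simpa [hzero] using f.lipschitz.hausdorffMeasure_image_le (finrank ℝ F).cast_nonneg (frontier Ω)

lemma hausdorffMeasure_one_frontier_pos [MeasurableSpace E] [BorelSpace E]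
    (hE : 1 < Module.rank ℝ E) {Ω : Set E} (hΩ : IsBounded Ω) (hne : (interior Ω).Nonempty) :
    0 < Measure.hausdorffMeasure 1 (frontier Ω) := by
  have : Nontrivial E := rank_pos_iff_nontrivial.1 (zero_lt_one.trans hE)
  obtain ⟨v, hv⟩ := exists_ne (0 : E)
  obtain ⟨f, -, hfv⟩ := exists_dual_vector ℝ v (norm_ne_zero_iff.2 hv)
  have hf : (f : E →ₗ[ℝ] ℝ) ≠ 0 := fun hf => hv <| by
    simpa [hfv] using congr($hf v)
  have hker : LinearMap.ker (f : E →ₗ[ℝ] ℝ) ≠ ⊥ := fun hker => hE.not_ge <| by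
    simpa using LinearMap.lift_rank_le_of_injective _ (LinearMap.ker_eq_bot.1 hker)
  simpa using hausdorffMeasure_frontier_pos (LinearMap.surjective hf) hker hΩ hne

end Frontier

section Integration

variable {α β : Type*} [MeasurableSpace α] [MeasurableSpace β] {μ : Measure α} {ν : Measure β}

lemma integral_pos_of_ae_pos [NeZero μ] {f : α → ℝ} (hf : Integrable f μ)
    (hpos : ∀ᵐ x ∂μ, 0 < f x) : 0 < ∫ x, f x ∂μ := by
  refine (integral_nonneg_of_ae (hpos.mono fun _ => le_of_lt)).lt_of_ne' fun hzero => ?_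
  have hf0 : f =ᵐ[μ] 0 :=
    (integral_eq_zero_iff_of_nonneg_ae (hpos.mono fun _ => le_of_lt) hf).1 hzero
  obtain ⟨x, hx, hx0⟩ := (hpos.and hf0).exists
  exact hx.ne' hx0

lemma integrable_inv_norm_pow {E : Type*} [NormedAddCommGroup E] [MeasurableSpace E]
    [OpensMeasurableSpace E] {σ : Measure E} [IsFiniteMeasure σ] {ε : ℝ} (hε : 0 < ε)
    (hσ : ∀ᵐ x ∂σ, ε ≤ ‖x‖) (k : ℕ) : Integrable (fun x => (‖x‖ ^ k)⁻¹) σ := by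
  refine .of_bound (by fun_prop) (ε ^ k)⁻¹ (hσ.mono fun x hx => ?_)
  rw [norm_of_nonneg (by positivity)]
  gcongr

lemma integrable_sq_of_abs_le_mul [SFinite ν] {F : α × β → ℝ} {A : α → ℝ} {K : β → ℝ}
    (hF : AEStronglyMeasurable F (μ.prod ν)) (hA : Integrable (fun a => A a ^ 2) μ)
    (hK : Integrable (fun b => K b ^ 2) ν) (hle : ∀ᵐ p ∂μ.prod ν, |F p| ≤ A p.1 * K p.2) :
    Integrable (fun p => |F p| ^ 2) (μ.prod ν) := by
  refine (hA.mul_prod hK).mono' (hF.norm.pow 2) (hle.mono fun p hp => ?_)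
  rw [norm_of_nonneg (by positivity), ← mul_pow]
  gcongr

lemma integral_integral_sq_le_of_abs_le_mul [SFinite μ] [SFinite ν] {F : α × β → ℝ} {A : α → ℝ}
    {K : β → ℝ} (hA : Integrable (fun a => A a ^ 2) μ) (hK : Integrable (fun b => K b ^ 2) ν)
    (hF : Integrable (fun p => |F p| ^ 2) (μ.prod ν))
    (hle : ∀ᵐ p ∂μ.prod ν, |F p| ≤ A p.1 * K p.2) :
    ∫ a, ∫ b, |F (a, b)| ^ 2 ∂ν ∂μ ≤ (∫ a, A a ^ 2 ∂μ) * ∫ b, K b ^ 2 ∂ν := by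
  rw [← integral_prod_mul, ← integral_prod _ hF]
  refine integral_mono_ae hF (hA.mul_prod hK) (hle.mono fun p hp => ?_)
  simp only [← mul_pow]
  gcongr

lemma integrableOn_sq_integral_Ioc {a b : ℝ} {φ : ℝ → ℝ} (hφ : IntegrableOn φ (Ioc a b)) :
    IntegrableOn (fun τ => (∫ s in Ioc a τ, φ s) ^ 2) (Ioc a b) := by
  have hcont := intervalIntegral.continuousOn_primitive
    ((integrableOn_Icc_iff_integrableOn_Ioc).2 hφ)
  exact (hcont.pow 2).integrableOn_Icc.mono_set Ioc_subset_Icc_self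

lemma aestronglyMeasurable_integral_Ioc {E : Type*} [NormedAddCommGroup E] [NormedSpace ℝ E]
    {a b : ℝ} {f : (ℝ × β) × ℝ → E}
    (hf : AEStronglyMeasurable f
      (((volume.restrict (Ioc a b)).prod ν).prod (volume.restrict (Ioc a b)))) :
    AEStronglyMeasurable (fun p : ℝ × β => ∫ s in Ioc a p.1, f (p, s))
      ((volume.restrict (Ioc a b)).prod ν) := by
  have hS : MeasurableSet {q : (ℝ × β) × ℝ | q.2 ≤ q.1.1} :=
    measurableSet_le (by fun_prop) (by fun_prop)
  refine (hf.indicator hS).integral_prod_right'.congr ?_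
  filter_upwards [Measure.quasiMeasurePreserving_fst.ae (ae_restrict_mem measurableSet_Ioc)]
    with p hp
  have hIoc : Ioc a b ∩ Iic p.1 = Ioc a p.1 := by
    rw [← Ioi_inter_Iic, ← Ioi_inter_Iic, inter_assoc, Iic_inter_Iic, min_eq_right hp.2]
  rw [← hIoc, ← setIntegral_indicator measurableSet_Iic]
  rfl

end Integration

lemma hasGradientAt_integral_of_dominated_of_gradient_le {α F : Type*} [MeasurableSpace α]
    {μ : Measure α} [NormedAddCommGroup F] [InnerProductSpace ℝ F] [CompleteSpace F]
    {f : F → α → ℝ} {f' : F → α → F} {x₀ : F} {s : Set F} {bound : α → ℝ} (hs : s ∈ nhds x₀)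
    (hf_meas : ∀ᶠ x in nhds x₀, AEStronglyMeasurable (f x) μ) (hf_int : Integrable (f x₀) μ)
    (hf'_meas : AEStronglyMeasurable (f' x₀) μ) (h_bound : ∀ᵐ a ∂μ, ∀ x ∈ s, ‖f' x a‖ ≤ bound a)
    (bound_integrable : Integrable bound μ)
    (h_grad : ∀ᵐ a ∂μ, ∀ x ∈ s, HasGradientAt (f · a) (f' x a) x) :
    HasGradientAt (fun x => ∫ a, f x a ∂μ) (∫ a, f' x₀ a ∂μ) x₀ := by
  have hderiv := hasFDerivAt_integral_of_dominated_of_fderiv_le (𝕜 := ℝ)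
    (F' := fun x a => InnerProductSpace.toDual ℝ F (f' x a)) hs hf_meas hf_int
    ((InnerProductSpace.toDual ℝ F).continuous.comp_aestronglyMeasurable hf'_meas)
    (by simpa using h_bound) bound_integrable h_grad
  have hf'_int : Integrable (f' x₀) μ :=
    bound_integrable.mono' hf'_meas (h_bound.mono fun a ha => ha x₀ (mem_of_mem_nhds hs))
  have hcomm : ∫ a, InnerProductSpace.toDual ℝ F (f' x₀ a) ∂μ =
      InnerProductSpace.toDual ℝ F (∫ a, f' x₀ a ∂μ) :=
    ContinuousLinearMap.integral_comp_commSL RCLike.conj_smul (innerSL ℝ) hf'_int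
  rwa [hcomm] at hderiv

lemma pow_mul_exp_neg_le {z : ℝ} (hz : 0 ≤ z) (k : ℕ) :
    z ^ k * exp (-z) ≤ (k : ℝ) ^ k * exp (-k) := by
  rcases k.eq_zero_or_pos with rfl | hk
  · simpa using hz
  have htangent : z ≤ k * exp (z / k - 1) := by
    have := mul_le_mul_of_nonneg_left (add_one_le_exp (z / k - 1)) k.cast_nonneg
    rwa [sub_add_cancel, mul_div_cancel₀ _ (by positivity)] at this
  calc z ^ k * exp (-z) ≤ (k * exp (z / k - 1)) ^ k * exp (-z) := by gcongr
    _ = k ^ k * exp (-k) := by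
      rw [mul_pow, ← exp_nat_mul, mul_assoc, ← exp_add]
      congr 2
      field_simp
      ring

lemma inv_pow_mul_exp_neg_div_le {r T : ℝ} (hr : 0 < r) (hT : 0 ≤ T) {k : ℕ} (hk : k ≠ 0) :
    T⁻¹ ^ k * exp (-(r / T)) ≤ k ^ k * exp (-k) * r⁻¹ ^ k := by
  rcases hT.eq_or_lt with rfl | hT
  · rw [inv_zero, zero_pow hk, zero_mul]
    positivity
  calc T⁻¹ ^ k * exp (-(r / T)) = (r / T) ^ k * exp (-(r / T)) * r⁻¹ ^ k := by
        rw [mul_right_comm, ← mul_pow, div_mul_eq_mul_div, mul_inv_cancel₀ hr.ne', one_div]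
    _ ≤ k ^ k * exp (-k) * r⁻¹ ^ k :=
      mul_le_mul_of_nonneg_right (pow_mul_exp_neg_le (by positivity) k) (by positivity)

section HeatKernel

variable {d t : ℝ}

/-- The spatial gradient `∇ₓG_t(x) = -(G_t(x) / (2dt)) x` of the heat kernel, which is `0` at
`t = 0` because of `1 / 0 = 0`. -/
noncomputable def heatKernelGradient (d t : ℝ) (x : EuclideanSpace ℝ (Fin 2)) :
    EuclideanSpace ℝ (Fin 2) :=
  -(heatKernel d t x / (2 * d * t)) • x

lemma hasGradientAt_heatKernel (d t : ℝ) (x : EuclideanSpace ℝ (Fin 2)) :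
    HasGradientAt (heatKernel d t) (heatKernelGradient d t x) x := by
  have hexp := ((hasStrictFDerivAt_norm_sq x).hasFDerivAt.neg.mul_const (4 * d * t)⁻¹).exp
  refine (hexp.const_mul (4 * π * d * t)⁻¹).congr_fderiv ?_
  ext v
  simp only [heatKernelGradient, heatKernel, div_eq_mul_inv, mul_inv_rev, Pi.neg_apply, neg_mul,
    smul_neg, neg_smul, neg_apply, smul_apply,
    coe_innerSL_apply, nsmul_eq_mul, Nat.cast_ofNat, smul_eq_mul, map_neg, map_smul,
    InnerProductSpace.toDual_apply_apply, neg_inj]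
  ring

lemma measurable_heatKernel (d : ℝ) :
    Measurable fun p : ℝ × EuclideanSpace ℝ (Fin 2) => heatKernel d p.1 p.2 := by
  unfold heatKernel
  fun_prop

lemma measurable_heatKernelGradient (d : ℝ) :
    Measurable fun p : ℝ × EuclideanSpace ℝ (Fin 2) => heatKernelGradient d p.1 p.2 := by
  have := measurable_heatKernel d
  unfold heatKernelGradient
  fun_prop

lemma norm_heatKernel_le (hd : 0 ≤ d) (ht : 0 ≤ t) {x : EuclideanSpace ℝ (Fin 2)} (hx : x ≠ 0) :
    ‖heatKernel d t x‖ ≤ exp (-1) / π * (‖x‖ ^ 2)⁻¹ := by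
  have hT : 0 ≤ 4 * d * t := by positivity
  have hprofile := inv_pow_mul_exp_neg_div_le (pow_pos (norm_pos_iff.2 hx) 2) hT one_ne_zero
  calc ‖heatKernel d t x‖ = π⁻¹ * ((4 * d * t)⁻¹ ^ 1 * exp (-(‖x‖ ^ 2 / (4 * d * t)))) := by
        rw [heatKernel, norm_of_nonneg (by positivity), neg_div]
        ring
    _ ≤ π⁻¹ * ((1 : ℕ) ^ 1 * exp (-(1 : ℕ)) * (‖x‖ ^ 2)⁻¹ ^ 1) := by gcongr
    _ = exp (-1) / π * (‖x‖ ^ 2)⁻¹ := by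
        push_cast
        ring

lemma norm_heatKernelGradient_le (hd : 0 ≤ d) (ht : 0 ≤ t) (x : EuclideanSpace ℝ (Fin 2)) :
    ‖heatKernelGradient d t x‖ ≤ 8 * exp (-2) / π * (‖x‖ ^ 3)⁻¹ := by
  rcases eq_or_ne x 0 with rfl | hx
  · simp [heatKernelGradient]
  have hr : 0 < ‖x‖ := norm_pos_iff.2 hx
  have hT : 0 ≤ 4 * d * t := by positivity
  have hG : 0 ≤ heatKernel d t x := by unfold heatKernel; positivity
  have hprofile := inv_pow_mul_exp_neg_div_le (pow_pos hr 2) hT two_ne_zero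
  calc ‖heatKernelGradient d t x‖
      = 2 / π * ((4 * d * t)⁻¹ ^ 2 * exp (-(‖x‖ ^ 2 / (4 * d * t)))) * ‖x‖ := by
        rw [heatKernelGradient, norm_smul, norm_neg, norm_of_nonneg (by positivity), heatKernel,
          neg_div]
        ring
    _ ≤ 2 / π * ((2 : ℕ) ^ 2 * exp (-(2 : ℕ)) * (‖x‖ ^ 2)⁻¹ ^ 2) * ‖x‖ := by gcongr
    _ = 8 * exp (-2) / π * (‖x‖ ^ 3)⁻¹ := by
        push_cast
        field_simp
        ring

end HeatKernel

section SourceSolution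

variable {d t τ : ℝ} {φ : ℝ → ℝ}

/-- The solution `û(x, t) = ∫₀ᵗ G_{t-s}(x) φ(s) ds` of the heat equation which is driven by a point
source of strength `φ` at the origin and has zero initial data. -/
noncomputable def sourceSolution (d : ℝ) (φ : ℝ → ℝ) (x : EuclideanSpace ℝ (Fin 2)) (t : ℝ) : ℝ :=
  ∫ s in Ioc 0 t, heatKernel d (t - s) x * φ s

lemma norm_smul_heatKernelGradient_le (hd : 0 ≤ d) {s : ℝ} (hs : s ∈ Ioc 0 τ)
    (x : EuclideanSpace ℝ (Fin 2)) :
    ‖φ s • heatKernelGradient d (τ - s) x‖ ≤ 8 * exp (-2) / π * (‖x‖ ^ 3)⁻¹ * |φ s| := by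
  rw [norm_smul, norm_eq_abs, mul_comm]
  gcongr
  exact norm_heatKernelGradient_le hd (sub_nonneg.2 hs.2) x

lemma integrableOn_heatKernel_mul (hd : 0 ≤ d) (hφ : IntegrableOn φ (Ioc 0 τ))
    {x : EuclideanSpace ℝ (Fin 2)} (hx : x ≠ 0) :
    IntegrableOn (fun s => heatKernel d (τ - s) x * φ s) (Ioc 0 τ) := by
  have hmeas : Measurable fun s => heatKernel d (τ - s) x :=
    (measurable_heatKernel d).comp (by fun_prop : Measurable fun s => (τ - s, x))
  refine Integrable.bdd_mul hφ hmeas.aestronglyMeasurable (c := exp (-1) / π * (‖x‖ ^ 2)⁻¹) ?_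
  exact (ae_restrict_mem measurableSet_Ioc).mono fun s hs =>
    norm_heatKernel_le hd (sub_nonneg.2 hs.2) hx

lemma hasGradientAt_sourceSolution (hd : 0 ≤ d) (hφ : IntegrableOn φ (Ioc 0 τ))
    {x : EuclideanSpace ℝ (Fin 2)} (hx : x ≠ 0) :
    HasGradientAt (fun y => sourceSolution d φ y τ)
      (∫ s in Ioc 0 τ, φ s • heatKernelGradient d (τ - s) x) x := by
  have hr : 0 < ‖x‖ := norm_pos_iff.2 hx
  have hfar : ∀ y ∈ Metric.ball x (‖x‖ / 2), ‖x‖ / 2 ≤ ‖y‖ := fun y hy => by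
    have := norm_sub_norm_le x y
    rw [mem_ball_iff_norm'] at hy
    linarith
  have hpair (y : EuclideanSpace ℝ (Fin 2)) : Measurable fun s => (τ - s, y) := by fun_prop
  refine hasGradientAt_integral_of_dominated_of_gradient_le
    (f' := fun y s => φ s • heatKernelGradient d (τ - s) y)
    (bound := fun s => 8 * exp (-2) / π * ((‖x‖ / 2) ^ 3)⁻¹ * |φ s|)
    (Metric.ball_mem_nhds x (half_pos hr))
    (.of_forall fun y => ((measurable_heatKernel d).comp (hpair y)).aestronglyMeasurable.mul hφ.1)
    (integrableOn_heatKernel_mul hd hφ hx)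
    (hφ.1.smul ((measurable_heatKernelGradient d).comp (hpair x)).aestronglyMeasurable)
    ?_ (hφ.abs.const_mul _) (.of_forall fun s y _ => ?_)
  · filter_upwards [ae_restrict_mem measurableSet_Ioc] with s hs y hy
    refine (norm_smul_heatKernelGradient_le hd hs y).trans ?_
    gcongr
    exact hfar y hy
  · refine ((hasGradientAt_heatKernel d (τ - s) y).hasFDerivAt.mul_const (φ s)).congr_fderiv ?_
    exact (map_smul (innerSL ℝ) _ _).symm

lemma norm_gradient_sourceSolution_le (hd : 0 ≤ d) (hφ : IntegrableOn φ (Ioc 0 τ))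
    {x : EuclideanSpace ℝ (Fin 2)} (hx : x ≠ 0) :
    ‖gradient (fun y => sourceSolution d φ y τ) x‖ ≤
      8 * exp (-2) / π * (‖x‖ ^ 3)⁻¹ * ∫ s in Ioc 0 τ, |φ s| := by
  rw [(hasGradientAt_sourceSolution hd hφ hx).gradient, ← integral_const_mul]
  exact norm_integral_le_of_norm_le (hφ.abs.const_mul _) <|
    (ae_restrict_mem measurableSet_Ioc).mono fun s hs => norm_smul_heatKernelGradient_le hd hs x

lemma aestronglyMeasurable_gradient_sourceSolution (hd : 0 ≤ d) (hφ : IntegrableOn φ (Ioc 0 t))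
    {σ : Measure (EuclideanSpace ℝ (Fin 2))} [SFinite σ] (hσ : ∀ᵐ x ∂σ, x ≠ 0) :
    AEStronglyMeasurable
      (fun p : ℝ × EuclideanSpace ℝ (Fin 2) => gradient (fun y => sourceSolution d φ y p.1) p.2)
      ((volume.restrict (Ioc 0 t)).prod σ) := by
  have hshift : Measurable fun q : (ℝ × EuclideanSpace ℝ (Fin 2)) × ℝ => (q.1.1 - q.2, q.1.2) := by
    fun_prop
  refine (aestronglyMeasurable_integral_Ioc (hφ.1.comp_snd.smul
    ((measurable_heatKernelGradient d).comp hshift).aestronglyMeasurable)).congr ?_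
  filter_upwards [Measure.quasiMeasurePreserving_fst.ae (ae_restrict_mem measurableSet_Ioc),
    Measure.quasiMeasurePreserving_snd.ae hσ] with p hτ hx
  have hφτ := hφ.mono_set (Ioc_subset_Ioc_right hτ.2)
  exact (hasGradientAt_sourceSolution hd hφτ hx).gradient.symm

lemma abs_mul_inner_gradient_sourceSolution_le (hd : 0 ≤ d) (hφ : IntegrableOn φ (Ioc 0 τ))
    {x v : EuclideanSpace ℝ (Fin 2)} (hx : x ≠ 0) (hv : ‖v‖ ≤ 1) :
    |d * ⟪gradient (fun y => sourceSolution d φ y τ) x, v⟫| ≤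
      (∫ s in Ioc 0 τ, |φ s|) * (d * (8 * exp (-2) / π * (‖x‖ ^ 3)⁻¹)) := by
  have hinner := (abs_real_inner_le_norm (gradient (fun y => sourceSolution d φ y τ) x) v).trans
    (mul_le_of_le_one_right (norm_nonneg _) hv)
  rw [abs_mul, abs_of_nonneg hd]
  calc d * |⟪gradient (fun y => sourceSolution d φ y τ) x, v⟫|
      ≤ d * (8 * exp (-2) / π * (‖x‖ ^ 3)⁻¹ * ∫ s in Ioc 0 τ, |φ s|) := by
        gcongr
        exact hinner.trans (norm_gradient_sourceSolution_le hd hφ hx)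
    _ = _ := by ring

end SourceSolution

theorem flux_bound_zero_initial_general {d : ℝ} (hd : 0 < d)
    {σ : Measure (EuclideanSpace ℝ (Fin 2))} [IsFiniteMeasure σ] [NeZero σ]
    {ε : ℝ} (hε : 0 < ε) (hσ : ∀ᵐ x ∂σ, ε ≤ ‖x‖)
    {n : EuclideanSpace ℝ (Fin 2) → EuclideanSpace ℝ (Fin 2)} (hn_meas : AEStronglyMeasurable n σ)
    (hn : ∀ᵐ x ∂σ, ‖n x‖ ≤ 1) {φ : ℝ → ℝ} (hφ : ∀ t > 0, IntegrableOn φ (Ioc 0 t)) :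
    Integrable (fun x => (8 * exp (-2) / π) ^ 2 * (‖x‖ ^ 6)⁻¹) σ ∧
    0 < ∫ x, (8 * exp (-2) / π) ^ 2 * (‖x‖ ^ 6)⁻¹ ∂σ ∧
    ∀ t > (0 : ℝ),
      Integrable (fun p : ℝ × EuclideanSpace ℝ (Fin 2) =>
          |d * ⟪gradient (fun y => sourceSolution d φ y p.1) p.2, n p.2⟫| ^ 2)
        ((volume.restrict (Ioc 0 t)).prod σ) ∧
      (∫ τ in Ioc 0 t, ∫ x, |d * ⟪gradient (fun y => sourceSolution d φ y τ) x, n x⟫| ^ 2 ∂σ) ≤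
        d ^ 2 * (∫ x, (8 * exp (-2) / π) ^ 2 * (‖x‖ ^ 6)⁻¹ ∂σ) *
          ∫ τ in Ioc 0 t, (∫ s in Ioc 0 τ, |φ s|) ^ 2 := by
  have hσ0 : ∀ᵐ x ∂σ, x ≠ 0 := hσ.mono fun x hx => norm_pos_iff.1 (hε.trans_le hx)
  have hC : Integrable (fun x => (8 * exp (-2) / π) ^ 2 * (‖x‖ ^ 6)⁻¹) σ :=
    (integrable_inv_norm_pow hε hσ 6).const_mul _
  refine ⟨hC, integral_pos_of_ae_pos hC (hσ0.mono fun x hx => by positivity), fun t ht => ?_⟩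
  have hweight (x : EuclideanSpace ℝ (Fin 2)) : (d * (8 * exp (-2) / π * (‖x‖ ^ 3)⁻¹)) ^ 2 =
      d ^ 2 * ((8 * exp (-2) / π) ^ 2 * (‖x‖ ^ 6)⁻¹) := by ring
  have hK : Integrable (fun x => (d * (8 * exp (-2) / π * (‖x‖ ^ 3)⁻¹)) ^ 2) σ := by
    simpa only [hweight] using hC.const_mul (d ^ 2)
  have hA := integrableOn_sq_integral_Ioc (hφ t ht).abs
  have hle : ∀ᵐ p ∂(volume.restrict (Ioc 0 t)).prod σ,
      |d * ⟪gradient (fun y => sourceSolution d φ y p.1) p.2, n p.2⟫| ≤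
        (∫ s in Ioc 0 p.1, |φ s|) * (d * (8 * exp (-2) / π * (‖p.2‖ ^ 3)⁻¹)) := by
    filter_upwards [Measure.quasiMeasurePreserving_fst.ae (ae_restrict_mem measurableSet_Ioc),
      Measure.quasiMeasurePreserving_snd.ae (hσ0.and hn)] with p hτ hx
    exact abs_mul_inner_gradient_sourceSolution_le hd.le (hφ p.1 hτ.1) hx.1 hx.2
  have hflux := integrable_sq_of_abs_le_mul
    (((aestronglyMeasurable_gradient_sourceSolution hd.le (hφ t ht) hσ0).inner
      hn_meas.comp_snd).const_mul d) hA hK hle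
  refine ⟨hflux, (integral_integral_sq_le_of_abs_le_mul hA hK hflux hle).trans_eq ?_⟩
  simp only [hweight, integral_const_mul]
  ring

/-- Flux bound for the pure source solution `û(x,t) := ∫₀ᵗ G_{t−s}(x) φ̄(s) ds`:
the constant `C_Γ := ∫_Γ (8e⁻²/π)² ‖x‖⁻⁶ dσ` is finite and positive, and for all `t > 0`
`∫₀ᵗ ∫_Γ |d ∇û·n|² dσ dτ ≤ d² C_Γ ∫₀ᵗ ‖φ̄‖²_{L¹(0,τ)} dτ`. -/
theorem flux_bound_zero_initial (d : ℝ) (hd : 0 < d)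
    (Ω_O : Set (EuclideanSpace ℝ (Fin 2))) (hΩ_open : IsOpen Ω_O)
    (hΩ_bdd : Bornology.IsBounded Ω_O) (h0 : (0 : EuclideanSpace ℝ (Fin 2)) ∈ Ω_O)
    (σ : Measure (EuclideanSpace ℝ (Fin 2)))
    (hσ : σ = (MeasureTheory.Measure.hausdorffMeasure 1 :
      Measure (EuclideanSpace ℝ (Fin 2))).restrict (frontier Ω_O))
    (hσ_fin : IsFiniteMeasure σ)
    (n : EuclideanSpace ℝ (Fin 2) → EuclideanSpace ℝ (Fin 2)) (hn_meas : Measurable n)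
    (hn : ∀ x ∈ frontier Ω_O, ‖n x‖ = 1)
    (φb : ℝ → ℝ) (hφb_meas : Measurable φb)
    (hφb_int : ∀ t > (0 : ℝ), IntegrableOn (fun s => |φb s|) (Set.Ioc 0 t))
    (uhat : EuclideanSpace ℝ (Fin 2) → ℝ → ℝ)
    (huhat : uhat = fun x t => ∫ s in Set.Ioc (0 : ℝ) t, heatKernel d (t - s) x * φb s) :
    Integrable (fun x => (8 * Real.exp (-2) / Real.pi) ^ 2 * (‖x‖ ^ 6)⁻¹) σ ∧
    0 < ∫ x, (8 * Real.exp (-2) / Real.pi) ^ 2 * (‖x‖ ^ 6)⁻¹ ∂σ ∧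
    ∀ t > (0 : ℝ),
      (∫ τ in Set.Ioc (0 : ℝ) t, ∫ x, |d * ⟪gradient (fun y => uhat y τ) x, n x⟫| ^ 2 ∂σ) ≤
        d ^ 2 * (∫ x, (8 * Real.exp (-2) / Real.pi) ^ 2 * (‖x‖ ^ 6)⁻¹ ∂σ) *
          ∫ τ in Set.Ioc (0 : ℝ) t, (∫ s in Set.Ioc (0 : ℝ) τ, |φb s|) ^ 2 := by
  have h0_int : 0 ∈ interior Ω_O := hΩ_open.interior_eq.symm ▸ h0
  obtain ⟨ε, hε, hfar⟩ := exists_pos_forall_le_norm_of_mem_frontier h0_int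
  have hΓ : ∀ᵐ x ∂σ, x ∈ frontier Ω_O := hσ ▸ ae_restrict_mem isClosed_frontier.measurableSet
  have hΓ_pos := hausdorffMeasure_one_frontier_pos (by simp [← finrank_eq_rank]) hΩ_bdd ⟨0, h0_int⟩
  have : NeZero σ := ⟨by rw [hσ, Ne, Measure.restrict_eq_zero]; exact hΓ_pos.ne'⟩
  have hφb (t : ℝ) (ht : t > 0) : IntegrableOn φb (Ioc 0 t) :=
    (integrable_norm_iff hφb_meas.aestronglyMeasurable).1 (hφb_int t ht)
  subst huhat
  obtain ⟨hC, hC_pos, hflux⟩ := flux_bound_zero_initial_general hd hε (hΓ.mono hfar)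
    hn_meas.aestronglyMeasurable (hΓ.mono fun x hx => (hn x hx).le) hφb
  exact ⟨hC, hC_pos, fun t ht => (hflux t ht).2⟩
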